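/- For R > 0 let Q_R = {z ∈ ℂ : 0 < Re z < 2R and −R < Im z < R}. Let φ : ℂ → ℂ be holomorphic and injective on the right half-plane ℍ = {z ∈ ℂ : Re z > 0}, let H > 0 and 0 < α ≤ 1, and suppose that for every T ≥ 1 one has |φ(T·w₁) − φ(T·w₂)| ≤ H·T·|φ′(T)|·|w₁ − w₂|^α for all w₁, w₂ ∈ Q₁. Let R ≥ e and let a₀ = log R + i·y with y ≥ 0 be a point with |φ(a₀)| = R. Then R ≤ |φ(1)| + 32H·|φ′(1)|·(max(log R, y))². -/

import Mathlib

open Complex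

/-- The half-open square `Q_R = {0 < Re z < 2R, -R < Im z < R}`. -/
def Qsq (R : ℝ) : Set ℂ :=
  {z : ℂ | 0 < z.re ∧ z.re < 2 * R ∧ -R < z.im ∧ z.im < R}

/-!
Let `e` be holomorphic in the unit disc with `e' (0) = b`. If `z⁻¹ + e z` is injective, the image of
`ρ ≤ ‖z‖ ≤ r` is essentially contained in the ellipse traced by `z⁻¹ + b * z` on `‖z‖ = ρ`. The
real-linear map `w ↦ w - b * ρ ^ 2 * conj w` carries that ellipse to a circle, and comparing areas
as `ρ → 0` and then `r → 1` gives `‖b‖ ≤ 1`. This is the part of the area theorem that matters here;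
straightening the ellipse replaces the usual Green's formula for the enclosed area.

For `F` injective in the disc, with `F 0 = 0` and `F' (0) = 1`, take `e` from
`F (z ^ 2) ^ (-1 / 2) = z⁻¹ + e z` to get Bieberbach's bound `‖F'' (0)‖ ≤ 4`. A Cayley transform
carries it to the half-plane as `‖x * φ'' (x) + φ' (x)‖ ≤ 2 * ‖φ' (x)‖`, so `‖φ' (x)‖ / x` is
decreasing and `φ'` grows at most linearly. With `M` the larger of `log R` and `y`, the points
`a₀` and `1` lie in `Q_{2M}`, and the Hölder condition at the scale `2M` bounds `|φ (a₀) - φ (1)|`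
by a multiple of `M * |φ' (2M)|`, hence of `M ^ 2 * |φ' (1)|`.
-/

section UnivalentFunctions

open Filter MeasureTheory Metric Set Topology
open Real (circleAverage)
open scoped ComplexConjugate

section Area

theorem setIntegral_norm_mem_eq_integral_circleAverage {E : Type*} [NormedAddCommGroup E]
    [NormedSpace ℝ E] {f : ℂ → E} {s : Set ℝ} (hs : IsCompact s) (hs_pos : s ⊆ Ioi 0)
    (hf : ContinuousOn f (norm ⁻¹' s)) :
    ∫ z in norm ⁻¹' s, f z = ∫ r in s, (2 * Real.pi * r) • circleAverage f 0 r := by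
  have symm_eq (p : ℝ × ℝ) : Complex.polarCoord.symm p = circleMap 0 p.1 p.2 := by
    simp [circleMap, exp_mul_I]
  have indicator_eq : EqOn
      (fun p : ℝ × ℝ ↦ p.1 • (norm ⁻¹' s : Set ℂ).indicator f (Complex.polarCoord.symm p))
      ((s ×ˢ univ).indicator fun p ↦ p.1 • f (circleMap 0 p.1 p.2)) polarCoord.target := by
    intro p hp
    have norm_eq : ‖circleMap 0 p.1 p.2‖ = p.1 := by simp [abs_of_pos (mem_Ioi.mp hp.1)]
    by_cases h : p.1 ∈ s <;> simp [indicator, symm_eq, norm_eq, h]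
  have target_inter : polarCoord.target ∩ s ×ˢ univ = s ×ˢ Ioo (-Real.pi) Real.pi := by
    rw [polarCoord_target, prod_inter_prod, inter_univ, inter_eq_right.mpr hs_pos]
  have integrable : IntegrableOn (fun p : ℝ × ℝ ↦ p.1 • f (circleMap 0 p.1 p.2))
      (s ×ˢ Ioo (-Real.pi) Real.pi) (volume.prod volume) := by
    refine IntegrableOn.mono_set ?_ (prod_mono_right Ioo_subset_Icc_self)
    refine ContinuousOn.integrableOn_compact (hs.prod isCompact_Icc) (continuousOn_fst.smul ?_)
    refine hf.comp (by unfold circleMap; fun_prop) fun p hp ↦ ?_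
    simpa [abs_of_pos (mem_Ioi.mp (hs_pos hp.1))] using hp.1
  rw [← integral_indicator (measurable_norm hs.measurableSet),
    ← Complex.integral_comp_polarCoord_symm,
    setIntegral_congr_fun polarCoord.open_target.measurableSet indicator_eq,
    setIntegral_indicator (hs.measurableSet.prod .univ), target_inter, Measure.volume_eq_prod,
    setIntegral_prod _ integrable]
  refine setIntegral_congr_fun hs.measurableSet fun r _ ↦ ?_
  rw [Real.circleAverage_eq_integral_add (-Real.pi), integral_smul,
    ← integral_Ioc_eq_integral_Ioo,
    ← intervalIntegral.integral_of_le (by linarith [Real.pi_pos]),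
    intervalIntegral.integral_comp_add_right (fun θ ↦ f (circleMap 0 r θ)), smul_smul]
  field_simp
  ring_nf

theorem lintegral_norm_deriv_sq_eq_volume_image {f f' : ℂ → ℂ} {s : Set ℂ} (hs : MeasurableSet s)
    (hf : ∀ z ∈ s, HasDerivWithinAt f (f' z) s z) (hinj : InjOn f s) :
    ∫⁻ z in s, ENNReal.ofReal (‖f' z‖ ^ 2) = volume (f '' s) := by
  rw [← lintegral_abs_det_fderiv_eq_addHaar_image volume hs
    (fun z hz ↦ (hf z hz).hasFDerivWithinAt.restrictScalars ℝ) hinj]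
  congr! with z
  rw [ContinuousLinearMap.det, ContinuousLinearMap.coe_restrictScalars,
    LinearMap.det_restrictScalars]
  simp [Algebra.norm_complex_eq, normSq_eq_norm_sq]

/-- The real-linear map `w ↦ w - c * conj w`. For `c = b * ρ ^ 2` it sends the ellipse
`z⁻¹ + b * z`, `‖z‖ = ρ`, to a dilation of the circle. -/
noncomputable def ellipseToCircle (c : ℂ) : ℂ →L[ℝ] ℂ :=
  1 - c • (conjCLE : ℂ →L[ℝ] ℂ)

theorem ellipseToCircle_apply (c w : ℂ) : ellipseToCircle c w = w - c * conj w := by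
  simp [ellipseToCircle]

theorem det_ellipseToCircle (c : ℂ) : (ellipseToCircle c).det = 1 - ‖c‖ ^ 2 := by
  rw [ContinuousLinearMap.det, ← LinearMap.det_toMatrix basisOneI, Matrix.det_fin_two]
  simp only [LinearMap.toMatrix_apply, ContinuousLinearMap.coe_coe, ellipseToCircle_apply]
  simp [Complex.sq_norm, normSq_apply]
  ring

theorem re_circleAverage_eq_of_diffContOnCl {f : ℂ → ℂ} {c : ℂ} {R : ℝ}
    (hf : DiffContOnCl ℂ f (ball c |R|)) :
    circleAverage (fun z ↦ (f z).re) c R = (f c).re := by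
  have integrable : CircleIntegrable f c R := by
    rcases eq_or_ne R 0 with rfl | hR
    · simp
    · refine (hf.continuousOn.mono ?_).circleIntegrable'
      simpa [closure_ball _ (abs_ne_zero.mpr hR)] using sphere_subset_closedBall
  rw [← hf.circleAverage]
  exact reCLM.circleAverage_comp_comm integrable

/-- When `h` depends holomorphically on `z`, on each circle `‖z‖ = r` this minorant is the real part
of a function holomorphic in the disc, so its average is its value at `0`. -/
theorem re_le_norm_neg_inv_sq_add_sq (b h z : ℂ) :
    (((‖z‖ ^ 4)⁻¹ - ‖b‖ ^ 2 : ℝ) + 2 * ((conj b - ((‖z‖ ^ 4)⁻¹ : ℝ) * z ^ 2) * h)).re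
      ≤ ‖-(z ^ 2)⁻¹ + h‖ ^ 2 := by
  have inv_eq : (z ^ 2)⁻¹ = ((‖z‖ ^ 4)⁻¹ : ℝ) * conj z ^ 2 := by
    rw [Complex.inv_def, normSq_eq_norm_sq, norm_pow, map_pow]
    ring_nf
  have expand : ‖-(z ^ 2)⁻¹ + h‖ ^ 2 =
      (‖z‖ ^ 4)⁻¹ + ‖h‖ ^ 2 - 2 * (((‖z‖ ^ 4)⁻¹ : ℝ) * z ^ 2 * h).re := by
    have norm_eq : ‖(z ^ 2)⁻¹‖ ^ 2 = (‖z‖ ^ 4)⁻¹ := by simp [← pow_mul]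
    rw [← normSq_eq_norm_sq, normSq_add, normSq_eq_norm_sq, normSq_eq_norm_sq, norm_neg, norm_eq,
      inv_eq, ← conj_re (_ * _ * h)]
    simp only [map_mul, map_pow, conj_ofReal, neg_mul, neg_re]
    ring
  have dist_sq : ‖h‖ ^ 2 + ‖b‖ ^ 2 - 2 * (conj b * h).re = ‖h - b‖ ^ 2 := by
    rw [← normSq_eq_norm_sq (h - b), normSq_sub, normSq_eq_norm_sq, normSq_eq_norm_sq, mul_comm h]
  rw [expand, two_mul, sub_mul, add_re, add_re, sub_re, ofReal_re]
  linarith [sq_nonneg ‖h - b‖]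

theorem inv_pow_add_norm_sq_le_circleAverage {h : ℂ → ℂ} {r : ℝ} (hr : 0 < r)
    (hh : DiffContOnCl ℂ h (ball 0 r)) :
    (r ^ 4)⁻¹ + ‖h 0‖ ^ 2 ≤ circleAverage (fun z ↦ ‖-(z ^ 2)⁻¹ + h z‖ ^ 2) 0 r := by
  rw [← abs_of_pos hr] at hh
  have hr' : |r| ≠ 0 := abs_ne_zero.mpr hr.ne'
  let k : ℂ → ℂ := fun z ↦ ((r ^ 4)⁻¹ - ‖h 0‖ ^ 2 : ℝ) +
    2 * ((conj (h 0) - ((r ^ 4)⁻¹ : ℝ) * z ^ 2) * h z)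
  have hk : DiffContOnCl ℂ k (ball 0 |r|) := by
    have : Differentiable ℂ fun z : ℂ ↦ conj (h 0) - ((r ^ 4)⁻¹ : ℝ) * z ^ 2 := by fun_prop
    exact (diffContOnCl_const (c := (2 : ℂ))).smul (this.diffContOnCl.smul hh) |>.const_add _
  have sphere_subset : sphere (0 : ℂ) |r| ⊆ closure (ball 0 |r|) := by
    rw [closure_ball _ hr']
    exact sphere_subset_closedBall
  have k_zero : (k 0).re = (r ^ 4)⁻¹ + ‖h 0‖ ^ 2 := by
    simp only [k, zero_pow two_ne_zero, mul_zero, sub_zero, ← normSq_eq_conj_mul_self,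
      normSq_eq_norm_sq, two_mul, add_re, ofReal_re]
    ring
  rw [← k_zero, ← re_circleAverage_eq_of_diffContOnCl hk]
  refine Real.circleAverage_mono ?_ ?_ fun z hz ↦ ?_
  · exact (continuous_re.comp_continuousOn (hk.continuousOn.mono sphere_subset)).circleIntegrable'
  · refine ContinuousOn.circleIntegrable'
      ((ContinuousOn.add ?_ (hh.continuousOn.mono sphere_subset)).norm.pow 2)
    exact ((continuousOn_id.pow 2).inv₀ fun z hz ↦ pow_ne_zero 2 (ne_of_mem_sphere hz hr')).neg
  · have norm_eq : ‖z‖ = r := by simpa [abs_of_pos hr] using hz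
    simpa only [k, norm_eq] using re_le_norm_neg_inv_sq_add_sq (h 0) (h z) z

theorem integral_two_pi_mul_inv_pow_add {ρ r : ℝ} (c : ℝ) (hρ : 0 < ρ) (hr : 0 < r) :
    ∫ s in ρ..r, 2 * Real.pi * s * ((s ^ 4)⁻¹ + c) =
      Real.pi * ((ρ ^ 2)⁻¹ - (r ^ 2)⁻¹ + c * (r ^ 2 - ρ ^ 2)) := by
  have ne_zero {s : ℝ} (hs : s ∈ uIcc ρ r) : s ≠ 0 := ((lt_min hρ hr).trans_le hs.1).ne'
  rw [intervalIntegral.integral_eq_sub_of_hasDerivAt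
    (f := fun s ↦ Real.pi * (c * s ^ 2 - (s ^ 2)⁻¹))]
  · ring
  · intro s hs
    have := ne_zero hs
    refine (((hasDerivAt_pow 2 s).const_mul c).sub
      ((hasDerivAt_pow 2 s).inv (pow_ne_zero 2 this)) |>.const_mul Real.pi).congr_deriv ?_
    field_simp
    ring
  · refine ContinuousOn.intervalIntegrable (ContinuousOn.mul (by fun_prop) ?_)
    exact ((continuousOn_id.pow 4).inv₀ fun s hs ↦ pow_ne_zero 4 (ne_zero hs)).add
      continuousOn_const

theorem pi_mul_le_integral_annulus {h : ℂ → ℂ} {ρ r : ℝ} (hρ : 0 < ρ) (hρr : ρ ≤ r)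
    (hh : DiffContOnCl ℂ h (ball 0 r)) :
    Real.pi * ((ρ ^ 2)⁻¹ - (r ^ 2)⁻¹ + ‖h 0‖ ^ 2 * (r ^ 2 - ρ ^ 2)) ≤
      ∫ z in norm ⁻¹' Icc ρ r, ‖-(z ^ 2)⁻¹ + h z‖ ^ 2 := by
  have hr : 0 < r := hρ.trans_le hρr
  have pos_of_mem {s : ℝ} (hs : s ∈ Icc ρ r) : 0 < s := hρ.trans_le hs.1
  have cont : ContinuousOn (fun z ↦ ‖-(z ^ 2)⁻¹ + h z‖ ^ 2) (norm ⁻¹' Icc ρ r) := by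
    refine (ContinuousOn.add ?_ (hh.continuousOn.mono fun z hz ↦ ?_)).norm.pow 2
    · exact ((continuousOn_id.pow 2).inv₀ fun z hz ↦
        pow_ne_zero 2 (norm_pos_iff.mp (pos_of_mem hz))).neg
    · simpa [closure_ball _ hr.ne'] using hz.2
  have cont_average : ContinuousOn (circleAverage (fun z ↦ ‖-(z ^ 2)⁻¹ + h z‖ ^ 2) 0) (Icc ρ r) :=
    Real.ContinuousOn.circleAverage (by simp only [sub_zero]; exact cont)
      fun s hs ↦ (pos_of_mem hs).le
  rw [setIntegral_norm_mem_eq_integral_circleAverage isCompact_Icc (fun s hs ↦ pos_of_mem hs) cont,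
    ← integral_two_pi_mul_inv_pow_add _ hρ hr, integral_Icc_eq_integral_Ioc,
    ← intervalIntegral.integral_of_le hρr]
  refine intervalIntegral.integral_mono_on hρr ?_ ?_ fun s hs ↦ ?_
  · refine ContinuousOn.intervalIntegrable (ContinuousOn.mul (by fun_prop) ?_)
    rw [uIcc_of_le hρr]
    exact ((continuousOn_id.pow 4).inv₀ fun s hs ↦ (pow_pos (pos_of_mem hs) 4).ne').add
      continuousOn_const
  · rw [← uIcc_of_le hρr] at cont_average
    have cont_radius : Continuous fun s : ℝ ↦ 2 * Real.pi * s := by fun_prop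
    exact (cont_radius.continuousOn.smul cont_average).intervalIntegrable
  · have := pos_of_mem hs
    exact mul_le_mul_of_nonneg_left
      (inv_pow_add_norm_sq_le_circleAverage this (hh.mono (ball_subset_ball hs.2)))
      (by positivity)

theorem abs_det_mul_integral_norm_deriv_sq_le {g g' : ℂ → ℂ} {s : Set ℂ} (hs : MeasurableSet s)
    (hg : ∀ z ∈ s, HasDerivWithinAt g (g' z) s z) (hinj : InjOn g s)
    (hint : IntegrableOn (fun z ↦ ‖g' z‖ ^ 2) s) (L : ℂ →L[ℝ] ℂ) {M : ℝ} (hM : 0 ≤ M)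
    (hL : ∀ z ∈ s, ‖L (g z)‖ ≤ M) :
    |L.det| * ∫ z in s, ‖g' z‖ ^ 2 ≤ Real.pi * M ^ 2 := by
  have image_subset : L '' (g '' s) ⊆ closedBall 0 M := by
    rintro _ ⟨_, ⟨z, hz, rfl⟩, rfl⟩
    exact mem_closedBall_zero_iff.mpr (hL z hz)
  have volume_le := measure_mono (μ := volume) image_subset
  rwa [Measure.addHaar_image_continuousLinearMap,
    ← lintegral_norm_deriv_sq_eq_volume_image hs hg hinj,
    ← ofReal_integral_eq_lintegral_ofReal hint (.of_forall fun z ↦ sq_nonneg _),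
    Complex.volume_closedBall, ← ENNReal.ofReal_mul (abs_nonneg _), ← ENNReal.ofReal_pow hM,
    ← ENNReal.ofReal_coe_nnreal, ← ENNReal.ofReal_mul (by positivity),
    ENNReal.ofReal_le_ofReal_iff (by positivity), NNReal.coe_real_pi, mul_comm (M ^ 2)] at volume_le

theorem abs_det_mul_le_sq_of_injOn {e : ℂ → ℂ} (he : DifferentiableOn ℂ e (ball 0 1))
    (hinj : InjOn (fun z ↦ z⁻¹ + e z) (ball 0 1 \ {0})) (L : ℂ →L[ℝ] ℂ) {ρ r M : ℝ}
    (hρ : 0 < ρ) (hρr : ρ ≤ r) (hr : r < 1)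
    (hL : ∀ z, ‖z‖ ∈ Icc ρ r → ‖L (z⁻¹ + e z)‖ ≤ M) :
    |L.det| * ((ρ ^ 2)⁻¹ - (r ^ 2)⁻¹ + ‖deriv e 0‖ ^ 2 * (r ^ 2 - ρ ^ 2)) ≤ M ^ 2 := by
  set A : Set ℂ := norm ⁻¹' Icc ρ r
  have hA : IsCompact A := by
    refine (isCompact_closedBall (0 : ℂ) r).of_isClosed_subset
      (isClosed_Icc.preimage continuous_norm) fun z hz ↦ ?_
    simpa using hz.2
  have hA_sub : A ⊆ ball 0 1 \ {0} := fun z hz ↦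
    ⟨by simpa using hz.2.trans_lt hr, by simpa using hρ.trans_le hz.1⟩
  have hde : DifferentiableOn ℂ (deriv e) (ball 0 1) := he.deriv isOpen_ball
  have hderiv (z : ℂ) (hz : z ∈ A) :
      HasDerivWithinAt (fun z ↦ z⁻¹ + e z) (-(z ^ 2)⁻¹ + deriv e z) A z :=
    ((hasDerivAt_inv (hA_sub hz).2).add
      (he.differentiableAt (isOpen_ball.mem_nhds (hA_sub hz).1)).hasDerivAt).hasDerivWithinAt
  have cont : ContinuousOn (fun z ↦ ‖-(z ^ 2)⁻¹ + deriv e z‖ ^ 2) A := by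
    refine (ContinuousOn.add ?_ (hde.continuousOn.mono fun z hz ↦ (hA_sub hz).1)).norm.pow 2
    exact ((continuousOn_id.pow 2).inv₀ fun z hz ↦ pow_ne_zero 2 (hA_sub hz).2).neg
  have integral_ge := pi_mul_le_integral_annulus hρ hρr
    (hde.mono (closure_ball_subset_closedBall.trans (closedBall_subset_ball hr))).diffContOnCl
  have hM : 0 ≤ M := (norm_nonneg _).trans (hL ρ (by simpa [abs_of_pos hρ] using hρr))
  have integral_le := abs_det_mul_integral_norm_deriv_sq_le hA.measurableSet hderiv
    (hinj.mono hA_sub) (cont.integrableOn_compact hA) L hM hL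
  refine le_of_mul_le_mul_left ?_ Real.pi_pos
  calc _ = |L.det| * (Real.pi * _) := mul_left_comm _ _ _
    _ ≤ |L.det| * _ := mul_le_mul_of_nonneg_left integral_ge (abs_nonneg _)
    _ ≤ Real.pi * M ^ 2 := integral_le

theorem inv_add_mul_add_mul_sq_le {β C ρ s : ℝ} (hβ : 0 ≤ β) (hC : 0 ≤ C) (hρ : 0 < ρ)
    (hρ_small : 2 * ρ * (β + C) ≤ 1) (hρs : ρ ≤ s) (hs : s ≤ 1) :
    s⁻¹ + (1 - ρ ^ 2 / s ^ 2) * (β * s) + C * s ^ 2 ≤ ρ⁻¹ + C * ρ ^ 2 := by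
  have hs_pos : 0 < s := hρ.trans_le hρs
  have factor : ρ⁻¹ + C * ρ ^ 2 - (s⁻¹ + (1 - ρ ^ 2 / s ^ 2) * (β * s) + C * s ^ 2) =
      (s - ρ) / (s * ρ) * (1 - ρ * (s + ρ) * (β + C * s)) := by
    field_simp
    ring
  have small : ρ * (s + ρ) * (β + C * s) ≤ ρ * 2 * (β + C * 1) := by
    gcongr
    linarith
  rw [← sub_nonneg, factor]
  exact mul_nonneg (div_nonneg (by linarith) (by positivity)) (by linarith)

theorem norm_ellipseToCircle_inv_add_le {b E z : ℂ} {C ρ : ℝ} (hρ : 0 < ρ)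
    (hρ_small : 2 * ρ * (‖b‖ + C) ≤ 1) (hρz : ρ ≤ ‖z‖) (hz : ‖z‖ ≤ 1) (hE : ‖E‖ ≤ C * ‖z‖ ^ 2) :
    ‖ellipseToCircle (b * ρ ^ 2) (z⁻¹ + (b * z + E))‖ ≤
      ρ⁻¹ + (C + ‖b‖ ^ 2 + ‖b‖ * C) * ρ ^ 2 := by
  have hz_pos : 0 < ‖z‖ := hρ.trans_le hρz
  have hC : 0 ≤ C := nonneg_of_mul_nonneg_left ((norm_nonneg E).trans hE) (by positivity)
  have expand : ellipseToCircle (b * ρ ^ 2) (z⁻¹ + (b * z + E)) =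
      z⁻¹ + ((1 - ρ ^ 2 / ‖z‖ ^ 2 : ℝ) * (b * z) + (E - ρ ^ 2 * b * conj (b * z + E))) := by
    have conj_inv : conj z⁻¹ = z / ‖z‖ ^ 2 := by
      rw [map_inv₀, Complex.inv_def, normSq_conj, conj_conj, normSq_eq_norm_sq, div_eq_mul_inv]
      push_cast
      rfl
    rw [ellipseToCircle_apply, map_add, conj_inv]
    push_cast
    ring
  have factor_nonneg : 0 ≤ 1 - ρ ^ 2 / ‖z‖ ^ 2 := by
    rw [sub_nonneg, div_le_one (by positivity)]
    gcongr
  have norm_add_le : ‖b * z + E‖ ≤ ‖b‖ + C := by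
    refine norm_add_le_of_le ?_ (hE.trans ?_)
    · exact (norm_mul b z).trans_le (mul_le_of_le_one_right (norm_nonneg b) hz)
    · exact mul_le_of_le_one_right hC (pow_le_one₀ hz_pos.le hz)
  calc ‖ellipseToCircle (b * ρ ^ 2) (z⁻¹ + (b * z + E))‖
    _ ≤ ‖z‖⁻¹ + ((1 - ρ ^ 2 / ‖z‖ ^ 2) * (‖b‖ * ‖z‖) +
          (C * ‖z‖ ^ 2 + ρ ^ 2 * ‖b‖ * (‖b‖ + C))) := by
        rw [expand]
        refine norm_add_le_of_le (norm_inv z).le (norm_add_le_of_le ?_ (norm_sub_le_of_le hE ?_))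
        · rw [norm_mul, norm_mul, norm_real, Real.norm_of_nonneg factor_nonneg]
        · rw [norm_mul, norm_mul, norm_pow, norm_real, Real.norm_of_nonneg hρ.le, RCLike.norm_conj]
          gcongr
    _ ≤ ρ⁻¹ + (C + ‖b‖ ^ 2 + ‖b‖ * C) * ρ ^ 2 := by
        linarith [inv_add_mul_add_mul_sq_le (norm_nonneg b) hC hρ hρ_small hρz hz]

theorem exists_norm_sub_le_mul_sq {E : Type*} [NormedAddCommGroup E] [NormedSpace ℂ E]
    [CompleteSpace E] {f : ℂ → E} {U K : Set ℂ} {c : ℂ} (hU : IsOpen U)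
    (hf : DifferentiableOn ℂ f U) (hc : c ∈ U) (hK : IsCompact K) (hKU : K ⊆ U) :
    ∃ C, ∀ z ∈ K, ‖f z - f c - (z - c) • deriv f c‖ ≤ C * ‖z - c‖ ^ 2 := by
  have hf₂ : DifferentiableOn ℂ (dslope (dslope f c) c) U := by
    iterate 2 refine (Complex.differentiableOn_dslope (hU.mem_nhds hc)).mpr ?_
    exact hf
  obtain ⟨C, hC⟩ := hK.exists_bound_of_continuousOn (hf₂.continuousOn.mono hKU)
  refine ⟨C, fun z hz ↦ ?_⟩
  have expand : f z - f c - (z - c) • deriv f c = (z - c) ^ 2 • dslope (dslope f c) c z := by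
    rw [← sub_smul_dslope f, ← dslope_same f, ← smul_sub, ← sub_smul_dslope (dslope f c), smul_smul,
      sq]
  rw [expand, norm_smul, norm_pow, mul_comm]
  gcongr
  exact hC z hz

theorem exists_eventually_area_le {e : ℂ → ℂ} (he : DifferentiableOn ℂ e (ball 0 1))
    (hinj : InjOn (fun z ↦ z⁻¹ + e z) (ball 0 1 \ {0})) {r : ℝ} (hr : 0 < r) (hr₁ : r < 1) :
    ∃ K, ∀ᶠ ρ : ℝ in 𝓝[>] 0, (1 - (‖deriv e 0‖ * ρ ^ 2) ^ 2) *
      ((ρ ^ 2)⁻¹ - (r ^ 2)⁻¹ + ‖deriv e 0‖ ^ 2 * (r ^ 2 - ρ ^ 2)) ≤ (ρ⁻¹ + K * ρ ^ 2) ^ 2 := by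
  set b := deriv e 0
  obtain ⟨C, hC⟩ := exists_norm_sub_le_mul_sq isOpen_ball he (mem_ball_self one_pos)
    (isCompact_closedBall 0 r) (closedBall_subset_ball hr₁)
  simp only [sub_zero, smul_eq_mul, mul_comm _ (deriv e 0)] at hC
  have small : ∀ᶠ ρ : ℝ in 𝓝[>] 0, 2 * ρ * (‖b‖ + C) < 1 :=
    (Continuous.tendsto' (by fun_prop) 0 0 (by simp)).mono_left nhdsWithin_le_nhds
      |>.eventually_lt_const one_pos
  refine ⟨C + ‖b‖ ^ 2 + ‖b‖ * C, ?_⟩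
  filter_upwards [small, Ioo_mem_nhdsGT hr] with ρ hρ_small ⟨hρ, hρr⟩
  have norm_le (z : ℂ) (hz : ‖z‖ ∈ Icc ρ r) :
      ‖ellipseToCircle (b * ρ ^ 2) (z⁻¹ + (e z - e 0))‖ ≤
        ρ⁻¹ + (C + ‖b‖ ^ 2 + ‖b‖ * C) * ρ ^ 2 := by
    have := norm_ellipseToCircle_inv_add_le hρ hρ_small.le hz.1 (hz.2.trans hr₁.le)
      (hC z (mem_closedBall_zero_iff.mpr hz.2))
    rwa [add_sub_cancel] at this
  have hinj_sub : InjOn (fun z ↦ z⁻¹ + (e z - e 0)) (ball 0 1 \ {0}) := fun z hz w hw h ↦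
    hinj hz hw (by simpa [← add_sub_assoc] using h)
  have area_le := abs_det_mul_le_sq_of_injOn (he.sub_const (e 0)) hinj_sub _ hρ hρr.le hr₁ norm_le
  rw [deriv_sub_const_fun, det_ellipseToCircle, norm_mul, norm_pow, norm_real,
    Real.norm_of_nonneg hρ.le] at area_le
  have sq_le : ρ ^ 2 ≤ r ^ 2 := pow_le_pow_left₀ hρ.le hρr.le 2
  refine (mul_le_mul_of_nonneg_right (le_abs_self _) (add_nonneg ?_ ?_)).trans area_le
  · exact sub_nonneg.mpr (inv_anti₀ (by positivity) sq_le)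
  · exact mul_nonneg (sq_nonneg _) (sub_nonneg.mpr sq_le)

theorem norm_deriv_sq_mul_sq_le_of_injOn {e : ℂ → ℂ} (he : DifferentiableOn ℂ e (ball 0 1))
    (hinj : InjOn (fun z ↦ z⁻¹ + e z) (ball 0 1 \ {0})) {r : ℝ} (hr : 0 < r) (hr₁ : r < 1) :
    ‖deriv e 0‖ ^ 2 * r ^ 2 ≤ (r ^ 2)⁻¹ := by
  set β := ‖deriv e 0‖
  obtain ⟨K, hK⟩ := exists_eventually_area_le he hinj hr hr₁
  have tendsto : Tendsto (fun ρ : ℝ ↦ (r ^ 2)⁻¹ + 2 * K * ρ + K ^ 2 * ρ ^ 4 + β ^ 2 * ρ ^ 2 +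
      β ^ 2 * ρ ^ 2 * (1 + ρ ^ 2 * (β ^ 2 * (r ^ 2 - ρ ^ 2) - (r ^ 2)⁻¹)))
      (𝓝[>] 0) (𝓝 (r ^ 2)⁻¹) :=
    (Continuous.tendsto' (by fun_prop) 0 _ (by simp)).mono_left nhdsWithin_le_nhds
  refine ge_of_tendsto tendsto ?_
  filter_upwards [hK, self_mem_nhdsWithin] with ρ area_le hρ
  have hρ_ne : ρ ≠ 0 := (mem_Ioi.mp hρ).ne'
  rw [← sub_nonneg] at area_le ⊢
  convert! area_le using 1
  field_simp
  ring

theorem norm_deriv_le_one_of_injOn_inv_add {e : ℂ → ℂ} (he : DifferentiableOn ℂ e (ball 0 1))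
    (hinj : InjOn (fun z ↦ z⁻¹ + e z) (ball 0 1 \ {0})) :
    ‖deriv e 0‖ ≤ 1 := by
  have tendsto_left :
      Tendsto (fun r : ℝ ↦ ‖deriv e 0‖ ^ 2 * r ^ 2) (𝓝[<] 1) (𝓝 (‖deriv e 0‖ ^ 2)) :=
    (Continuous.tendsto' (by fun_prop) 1 _ (by simp)).mono_left nhdsWithin_le_nhds
  have tendsto_right : Tendsto (fun r : ℝ ↦ (r ^ 2)⁻¹) (𝓝[<] 1) (𝓝 1) := by
    simpa using ((continuous_pow 2).tendsto (1 : ℝ)).inv₀ (by simp) |>.mono_left nhdsWithin_le_nhds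
  have sq_le_one : ‖deriv e 0‖ ^ 2 ≤ 1 := by
    refine le_of_tendsto_of_tendsto tendsto_left tendsto_right ?_
    filter_upwards [Ioo_mem_nhdsLT (zero_lt_one' ℝ)] with r hr
    exact norm_deriv_sq_mul_sq_le_of_injOn he hinj hr.1 hr.2
  exact (sq_le_one_iff₀ (norm_nonneg _)).mp sq_le_one

end Area

section Bieberbach

theorem exists_differentiableOn_eqOn_exp_comp {U : Set ℂ} (hU : IsOpen U)
    (hU_conn : IsSimplyConnected U) {g : ℂ → ℂ} (hg : DifferentiableOn ℂ g U)
    (hg_ne : ∀ z ∈ U, g z ≠ 0) :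
    ∃ f, DifferentiableOn ℂ f U ∧ EqOn (exp ∘ f) g U := by
  obtain ⟨f, hf, hfg⟩ := exists_continuousOn_eqOn_exp_comp hU_conn hU hg.continuousOn
    fun ⟨z, hz, g_eq⟩ ↦ hg_ne z hz g_eq
  refine ⟨f, fun z hz ↦ DifferentiableAt.differentiableWithinAt ?_, hfg⟩
  have hzU : U ∈ 𝓝 z := hU.mem_nhds hz
  have im_small : ∀ᶠ w in 𝓝 z, |(f w - f z).im| < Real.pi := by
    have cont : ContinuousAt (fun w ↦ |(f w - f z).im|) z := by
      have := hf.continuousAt hzU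
      fun_prop
    exact cont.eventually_lt_const (by simp [Real.pi_pos])
  have eq_log : f =ᶠ[𝓝 z] fun w ↦ f z + log (g w / g z) := by
    filter_upwards [im_small, hzU] with w hw hwU
    rw [← hfg hwU, ← hfg hz, Function.comp_apply, Function.comp_apply, ← exp_sub,
      log_exp (abs_lt.mp hw).1 (abs_lt.mp hw).2.le, add_sub_cancel]
  refine DifferentiableAt.congr_of_eventuallyEq ?_ eq_log
  refine (((hg.differentiableAt hzU).div_const (g z)).clog ?_).const_add _
  simp [div_self (hg_ne z hz)]

theorem exists_differentiableOn_sq_mul_eq {U : Set ℂ} (hU : IsOpen U)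
    (hU_conn : IsSimplyConnected U) {q : ℂ → ℂ} (hq : DifferentiableOn ℂ q U)
    (hq_ne : ∀ z ∈ U, q z ≠ 0) (c : ℂ) (hc : c ∈ U) :
    ∃ k, DifferentiableOn ℂ k U ∧ k c = 1 ∧ ∀ z ∈ U, k z ^ 2 * q z = q c := by
  obtain ⟨L, hL, exp_L⟩ := exists_differentiableOn_eqOn_exp_comp hU hU_conn hq hq_ne
  refine ⟨fun z ↦ exp ((L c - L z) / 2), ((hL.const_sub _).div_const 2).cexp, by simp,
    fun z hz ↦ ?_⟩
  rw [← exp_L hz, ← exp_L hc, Function.comp_apply, Function.comp_apply, ← exp_nat_mul, ← exp_add]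
  congr 1
  push_cast
  ring

theorem deriv_deriv_eq_two_smul_deriv_dslope {E : Type*} [NormedAddCommGroup E] [NormedSpace ℂ E]
    [CompleteSpace E] {f : ℂ → E} {s : Set ℂ} {c : ℂ} (hs : s ∈ 𝓝 c) (hf : DifferentiableOn ℂ f s) :
    deriv (deriv f) c = 2 • deriv (dslope f c) c := by
  have hq : AnalyticAt ℂ (dslope f c) c := ((differentiableOn_dslope hs).mpr hf).analyticAt hs
  have deriv_eq : deriv f =ᶠ[𝓝 c] fun z ↦ (z - c) • deriv (dslope f c) z + dslope f c z := by
    filter_upwards [hq.eventually_analyticAt] with z hz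
    have hasDeriv := (((hasDerivAt_id z).sub_const c).smul
      hz.differentiableAt.hasDerivAt).add_const (f c)
    refine (hasDeriv.congr_of_eventuallyEq (.of_forall fun w ↦ ?_)).deriv.trans (by simp)
    simp [sub_smul_dslope]
  rw [deriv_eq.deriv_eq]
  have hasDeriv := (((hasDerivAt_id c).sub_const c).smul
    hq.deriv.differentiableAt.hasDerivAt).add hq.differentiableAt.hasDerivAt
  exact hasDeriv.deriv.trans (by simp [two_smul])

theorem dslope_ne_zero_of_injOn {𝕜 E : Type*} [NontriviallyNormedField 𝕜] [NormedAddCommGroup E]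
    [NormedSpace 𝕜 E] {f : 𝕜 → E} {s : Set 𝕜} {c z : 𝕜} (hinj : InjOn f s)
    (hc : c ∈ s) (hz : z ∈ s) (hf : deriv f c ≠ 0) : dslope f c z ≠ 0 := by
  rcases eq_or_ne z c with rfl | hzc
  · rwa [dslope_same]
  · intro h
    have := sub_smul_dslope f c z
    rw [h, smul_zero, eq_comm, sub_eq_zero] at this
    exact hzc (hinj hz hc this)

theorem inv_add_mul_dslope_sq {k : ℂ → ℂ} (hk : k 0 = 1) {z : ℂ} (hz : z ≠ 0) :
    z⁻¹ + z * dslope k 0 (z ^ 2) = k (z ^ 2) / z := by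
  have := sub_smul_dslope k 0 (z ^ 2)
  rw [sub_zero, smul_eq_mul, hk] at this
  field_simp
  rw [this, add_sub_cancel]

theorem mapsTo_pow_ball_one {𝕜 : Type*} [NormedDivisionRing 𝕜] {n : ℕ} (hn : n ≠ 0) :
    MapsTo (fun z : 𝕜 ↦ z ^ n) (ball 0 1) (ball 0 1) := fun z hz ↦ by
  simpa using pow_lt_one₀ (norm_nonneg z) (by simpa using hz) hn

theorem injOn_inv_add_mul_dslope_sq {F k : ℂ → ℂ} (hinj : InjOn F (ball 0 1))
    (hF₀ : deriv F 0 ≠ 0) (hk₀ : k 0 = 1)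
    (hk : ∀ z ∈ ball (0 : ℂ) 1, k z ^ 2 * dslope F 0 z = deriv F 0) :
    InjOn (fun z ↦ z⁻¹ + z * dslope k 0 (z ^ 2)) (ball 0 1 \ {0}) := by
  have sq_mem {z : ℂ} (hz : z ∈ ball (0 : ℂ) 1) : z ^ 2 ∈ ball (0 : ℂ) 1 :=
    mapsTo_pow_ball_one two_ne_zero hz
  have sq_mul {z : ℂ} (hz : z ∈ ball (0 : ℂ) 1 \ {0}) :
      (k (z ^ 2) / z) ^ 2 * (F (z ^ 2) - F 0) = deriv F 0 := by
    have hz₀ : z ≠ 0 := hz.2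
    rw [← hk _ (sq_mem hz.1), ← sub_smul_dslope F 0, sub_zero, smul_eq_mul]
    field_simp
  intro z hz w hw h
  simp only [inv_add_mul_dslope_sq hk₀ hz.2, inv_add_mul_dslope_sq hk₀ hw.2] at h
  have sq_ne : (k (z ^ 2) / z) ^ 2 ≠ 0 := left_ne_zero_of_mul (sq_mul hz ▸ hF₀)
  have F_eq : F (z ^ 2) = F (w ^ 2) :=
    sub_left_injective (mul_left_cancel₀ sq_ne ((sq_mul hz).trans (h ▸ (sq_mul hw).symm)))
  rw [← hinj (sq_mem hz.1) (sq_mem hw.1) F_eq] at h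
  have k_ne : k (z ^ 2) ≠ 0 := fun k_eq ↦ sq_ne (by simp [k_eq])
  exact inv_injective (mul_left_cancel₀ k_ne h)

theorem norm_deriv_le_one_of_sq_mul_dslope_eq {F k : ℂ → ℂ} (hinj : InjOn F (ball 0 1))
    (hF₀ : deriv F 0 ≠ 0) (hkd : DifferentiableOn ℂ k (ball 0 1)) (hk₀ : k 0 = 1)
    (hk : ∀ z ∈ ball (0 : ℂ) 1, k z ^ 2 * dslope F 0 z = deriv F 0) :
    ‖deriv k 0‖ ≤ 1 := by
  have ball_mem : ball (0 : ℂ) 1 ∈ 𝓝 0 := ball_mem_nhds 0 one_pos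
  have hl : DifferentiableOn ℂ (fun z ↦ dslope k 0 (z ^ 2)) (ball 0 1) :=
    ((differentiableOn_dslope ball_mem).mpr hkd).comp (by fun_prop)
      (mapsTo_pow_ball_one two_ne_zero)
  have deriv_eq : deriv (fun z ↦ z * dslope k 0 (z ^ 2)) 0 = deriv k 0 :=
    ((hasDerivAt_id 0).mul (hl.differentiableAt ball_mem).hasDerivAt).deriv.trans (by simp)
  rw [← deriv_eq]
  exact norm_deriv_le_one_of_injOn_inv_add (differentiableOn_id.mul hl)
    (injOn_inv_add_mul_dslope_sq hinj hF₀ hk₀ hk)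

theorem norm_deriv_deriv_le_four_mul_of_injOn {F : ℂ → ℂ} (hF : DifferentiableOn ℂ F (ball 0 1))
    (hinj : InjOn F (ball 0 1)) (hF₀ : deriv F 0 ≠ 0) :
    ‖deriv (deriv F) 0‖ ≤ 4 * ‖deriv F 0‖ := by
  have zero_mem : (0 : ℂ) ∈ ball 0 1 := mem_ball_self one_pos
  have ball_mem : ball (0 : ℂ) 1 ∈ 𝓝 0 := ball_mem_nhds 0 one_pos
  have ball_conn : IsSimplyConnected (ball (0 : ℂ) 1) :=
    have := contractibleSpace_ball (x := (0 : ℂ)) one_pos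
    SimplyConnectedSpace.ofContractible _
  have hq : DifferentiableOn ℂ (dslope F 0) (ball 0 1) := (differentiableOn_dslope ball_mem).mpr hF
  obtain ⟨k, hkd, hk₀, hk⟩ := exists_differentiableOn_sq_mul_eq isOpen_ball ball_conn hq
    (fun z hz ↦ dslope_ne_zero_of_injOn hinj zero_mem hz hF₀) 0 zero_mem
  rw [dslope_same] at hk
  have deriv_q : deriv (dslope F 0) 0 = -2 * deriv k 0 * deriv F 0 := by
    have const : (fun z ↦ k z ^ 2 * dslope F 0 z) =ᶠ[𝓝 0] fun _ ↦ deriv F 0 := by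
      filter_upwards [ball_mem] with z hz using hk z hz
    have hasDeriv := ((hkd.differentiableAt ball_mem).hasDerivAt.pow 2).mul
      (hq.differentiableAt ball_mem).hasDerivAt
    have deriv_zero := hasDeriv.unique ((hasDerivAt_const _ _).congr_of_eventuallyEq const)
    simp only [Pi.pow_apply, hk₀, dslope_same] at deriv_zero
    linear_combination deriv_zero
  calc ‖deriv (deriv F) 0‖
    _ = 4 * (‖deriv k 0‖ * ‖deriv F 0‖) := by
        rw [deriv_deriv_eq_two_smul_deriv_dslope ball_mem hF, deriv_q]
        simp
        ring
    _ ≤ 4 * ‖deriv F 0‖ := by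
        gcongr
        exact mul_le_of_le_one_left (norm_nonneg _)
          (norm_deriv_le_one_of_sq_mul_dslope_eq hinj hF₀ hkd hk₀ hk)

end Bieberbach

section HalfPlane

/-- The Cayley transform of the unit disc onto the right half-plane that sends `0` to `a`. -/
noncomputable def discToHalfPlane (a ζ : ℂ) : ℂ :=
  (a + conj a * ζ) / (1 - ζ)

theorem discToHalfPlane_zero (a : ℂ) : discToHalfPlane a 0 = a := by
  simp [discToHalfPlane]

theorem one_sub_ne_zero_of_mem_ball {ζ : ℂ} (hζ : ζ ∈ ball (0 : ℂ) 1) : 1 - ζ ≠ 0 := fun h ↦ by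
  simp [← sub_eq_zero.mp h] at hζ

theorem re_discToHalfPlane (a ζ : ℂ) :
    (discToHalfPlane a ζ).re = a.re * (1 - ‖ζ‖ ^ 2) / ‖1 - ζ‖ ^ 2 := by
  rw [discToHalfPlane, div_re, ← add_div, normSq_eq_norm_sq, Complex.sq_norm ζ, normSq_apply]
  simp
  ring

theorem re_discToHalfPlane_pos {a ζ : ℂ} (ha : 0 < a.re) (hζ : ζ ∈ ball (0 : ℂ) 1) :
    0 < (discToHalfPlane a ζ).re := by
  have norm_lt : ‖ζ‖ ^ 2 < 1 := pow_lt_one₀ (norm_nonneg ζ) (by simpa using hζ) two_ne_zero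
  have norm_pos : 0 < ‖1 - ζ‖ := norm_pos_iff.mpr (one_sub_ne_zero_of_mem_ball hζ)
  rw [re_discToHalfPlane]
  exact div_pos (mul_pos ha (by linarith)) (by positivity)

theorem injOn_discToHalfPlane {a : ℂ} (ha : a.re ≠ 0) : InjOn (discToHalfPlane a) (ball 0 1) := by
  intro z hz w hw h
  have two_re_ne : a + conj a ≠ 0 := by simp [add_conj, ha]
  rw [discToHalfPlane, discToHalfPlane, div_eq_div_iff (one_sub_ne_zero_of_mem_ball hz)
    (one_sub_ne_zero_of_mem_ball hw)] at h
  exact mul_left_cancel₀ two_re_ne (by linear_combination h)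

theorem hasDerivAt_discToHalfPlane (a : ℂ) {ζ : ℂ} (hζ : ζ ∈ ball (0 : ℂ) 1) :
    HasDerivAt (discToHalfPlane a) (2 * a.re / (1 - ζ) ^ 2) ζ := by
  have := (((hasDerivAt_id ζ).const_mul (conj a)).const_add a).div
    ((hasDerivAt_id ζ).const_sub 1) (one_sub_ne_zero_of_mem_ball hζ)
  refine this.congr_deriv ?_
  rw [← ofReal_ofNat, ← ofReal_mul, ← add_conj]
  simp only [id]
  ring

theorem hasDerivAt_comp_discToHalfPlane {φ : ℂ → ℂ} (hφ : DifferentiableOn ℂ φ {z | 0 < z.re})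
    {a ζ : ℂ} (ha : 0 < a.re) (hζ : ζ ∈ ball (0 : ℂ) 1) :
    HasDerivAt (fun ζ ↦ φ (discToHalfPlane a ζ))
      (deriv φ (discToHalfPlane a ζ) * (2 * a.re / (1 - ζ) ^ 2)) ζ := by
  have mem_nhds := (isOpen_lt continuous_const continuous_re).mem_nhds
    (re_discToHalfPlane_pos ha hζ)
  exact (hφ.differentiableAt mem_nhds).hasDerivAt.comp ζ (hasDerivAt_discToHalfPlane a hζ)

theorem deriv_comp_discToHalfPlane_zero {φ : ℂ → ℂ} (hφ : DifferentiableOn ℂ φ {z | 0 < z.re})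
    {a : ℂ} (ha : 0 < a.re) :
    deriv (fun ζ ↦ φ (discToHalfPlane a ζ)) 0 = 2 * a.re * deriv φ a := by
  rw [(hasDerivAt_comp_discToHalfPlane hφ ha (mem_ball_self one_pos)).deriv, discToHalfPlane_zero]
  ring

theorem deriv_deriv_comp_discToHalfPlane_zero {φ : ℂ → ℂ}
    (hφ : DifferentiableOn ℂ φ {z | 0 < z.re}) {a : ℂ} (ha : 0 < a.re) :
    deriv (deriv fun ζ ↦ φ (discToHalfPlane a ζ)) 0 =
      4 * a.re * (a.re * deriv (deriv φ) a + deriv φ a) := by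
  have deriv_eq : deriv (fun ζ ↦ φ (discToHalfPlane a ζ)) =ᶠ[𝓝 0]
      fun ζ ↦ deriv φ (discToHalfPlane a ζ) * (2 * a.re / (1 - ζ) ^ 2) := by
    filter_upwards [ball_mem_nhds 0 one_pos] with ζ hζ
    exact (hasDerivAt_comp_discToHalfPlane hφ ha hζ).deriv
  have hasDeriv_inv_sq :
      HasDerivAt (fun ζ : ℂ ↦ 2 * (a.re : ℂ) / (1 - ζ) ^ 2) (4 * (a.re : ℂ)) 0 := by
    refine ((hasDerivAt_const (0 : ℂ) (2 * (a.re : ℂ))).div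
      (((hasDerivAt_id (0 : ℂ)).const_sub 1).pow 2) (by simp)).congr_deriv ?_
    simp
    ring
  have hasDeriv := (hasDerivAt_comp_discToHalfPlane
    (hφ.deriv (isOpen_lt continuous_const continuous_re)) ha (mem_ball_self one_pos)).mul
      hasDeriv_inv_sq
  rw [deriv_eq.deriv_eq]
  refine hasDeriv.deriv.trans ?_
  rw [discToHalfPlane_zero]
  ring

theorem norm_re_mul_deriv_deriv_add_deriv_le {φ : ℂ → ℂ}
    (hφ : DifferentiableOn ℂ φ {z | 0 < z.re}) (hinj : InjOn φ {z | 0 < z.re}) {a : ℂ}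
    (ha : 0 < a.re) (hφa : deriv φ a ≠ 0) :
    ‖a.re * deriv (deriv φ) a + deriv φ a‖ ≤ 2 * ‖deriv φ a‖ := by
  have bieberbach := norm_deriv_deriv_le_four_mul_of_injOn
    (F := fun ζ ↦ φ (discToHalfPlane a ζ))
    (fun ζ hζ ↦ (hasDerivAt_comp_discToHalfPlane hφ ha hζ).differentiableAt.differentiableWithinAt)
    (hinj.comp (injOn_discToHalfPlane ha.ne') fun ζ hζ ↦ re_discToHalfPlane_pos ha hζ)
    (by simp [deriv_comp_discToHalfPlane_zero hφ ha, ha.ne', hφa])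
  rw [deriv_comp_discToHalfPlane_zero hφ ha,
    deriv_deriv_comp_discToHalfPlane_zero hφ ha] at bieberbach
  simp only [norm_mul, Complex.norm_ofNat, norm_real, Real.norm_of_nonneg ha.le] at bieberbach
  refine le_of_mul_le_mul_left ?_ (by positivity : 0 < 4 * a.re)
  linarith

theorem antitoneOn_norm_div_of_inner_le {E : Type*} [NormedAddCommGroup E] [InnerProductSpace ℝ E]
    {p p' : ℝ → E} (hp : ∀ x, 0 < x → HasDerivAt p (p' x) x)
    (hinner : ∀ x, 0 < x → x * inner ℝ (p x) (p' x) ≤ ‖p x‖ ^ 2) :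
    AntitoneOn (fun x ↦ ‖p x‖ / x) (Ioi 0) := by
  have hasDeriv (x : ℝ) (hx : 0 < x) : HasDerivAt (fun x ↦ ‖p x‖ ^ 2 / x ^ 2)
      (2 * (x * inner ℝ (p x) (p' x) - ‖p x‖ ^ 2) / x ^ 3) x := by
    refine ((hp x hx).norm_sq.div (hasDerivAt_pow 2 x) (pow_ne_zero 2 hx.ne')).congr_deriv ?_
    field_simp
    ring
  have antitone_sq : AntitoneOn (fun x ↦ ‖p x‖ ^ 2 / x ^ 2) (Ioi 0) := by
    refine antitoneOn_of_hasDerivWithinAt_nonpos (convex_Ioi 0)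
      (fun x hx ↦ (hasDeriv x hx).continuousAt.continuousWithinAt)
      (fun x hx ↦ (hasDeriv x (interior_subset hx)).hasDerivWithinAt) fun x hx ↦ ?_
    have hx₀ : 0 < x := interior_subset hx
    exact div_nonpos_of_nonpos_of_nonneg (by linarith [hinner x hx₀]) (by positivity)
  intro x hx y hy hxy
  have := antitone_sq hx hy hxy
  simp only [← div_pow] at this
  exact le_of_sq_le_sq this (div_nonneg (norm_nonneg _) (mem_Ioi.mp hx).le)

theorem antitoneOn_norm_deriv_div {φ : ℂ → ℂ} (hφ : DifferentiableOn ℂ φ {z | 0 < z.re})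
    (hinj : InjOn φ {z | 0 < z.re}) :
    AntitoneOn (fun x : ℝ ↦ ‖deriv φ x‖ / x) (Ioi 0) := by
  have open_halfPlane : IsOpen {z : ℂ | 0 < z.re} := isOpen_lt continuous_const continuous_re
  refine antitoneOn_norm_div_of_inner_le (p' := fun x ↦ deriv (deriv φ) x) (fun x hx ↦ ?_)
    fun x hx ↦ ?_
  · have mem_nhds : {z : ℂ | 0 < z.re} ∈ 𝓝 (x : ℂ) := open_halfPlane.mem_nhds (by simpa using hx)
    exact ((hφ.deriv open_halfPlane).differentiableAt mem_nhds).hasDerivAt.comp_ofReal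
  · rcases eq_or_ne (deriv φ x) 0 with hφx | hφx
    · simp [hφx]
    have norm_le := norm_re_mul_deriv_deriv_add_deriv_le hφ hinj (a := x) (by simpa using hx) hφx
    have inner_le := (real_inner_le_norm (deriv φ x) _).trans
      (mul_le_mul_of_nonneg_left norm_le (norm_nonneg _))
    rw [inner_add_right, real_inner_self_eq_norm_sq, ofReal_re, ← real_smul,
      real_inner_smul_right] at inner_le
    linarith

theorem norm_deriv_le_mul_norm_deriv_one {φ : ℂ → ℂ} (hφ : DifferentiableOn ℂ φ {z | 0 < z.re})
    (hinj : InjOn φ {z | 0 < z.re}) {x : ℝ} (hx : 1 ≤ x) :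
    ‖deriv φ x‖ ≤ x * ‖deriv φ 1‖ := by
  have hx₀ : 0 < x := one_pos.trans_le hx
  have := antitoneOn_norm_deriv_div hφ hinj (mem_Ioi.mpr one_pos) (mem_Ioi.mpr hx₀) hx
  simpa [div_le_iff₀' hx₀] using this

end HalfPlane

end UnivalentFunctions

section HolderTract

theorem div_mem_Qsq_one {T : ℝ} (hT : 0 < T) {z : ℂ} (hz : z ∈ Qsq T) : z / T ∈ Qsq 1 := by
  obtain ⟨re_pos, re_lt, lt_im, im_lt⟩ := hz
  refine ⟨?_, ?_, ?_, ?_⟩ <;> simp only [div_ofReal_re, div_ofReal_im]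
  · positivity
  · rw [div_lt_iff₀ hT]
    linarith
  · rw [lt_div_iff₀ hT]
    linarith
  · rwa [div_lt_one hT]

theorem norm_sub_le_of_mem_Qsq {E : Type*} [SeminormedAddCommGroup E] {f : ℂ → E} {C T α : ℝ}
    (hT : 0 < T) (hf : ∀ w₁ ∈ Qsq 1, ∀ w₂ ∈ Qsq 1, ‖f (T * w₁) - f (T * w₂)‖ ≤ C * ‖w₁ - w₂‖ ^ α)
    {z₁ z₂ : ℂ} (hz₁ : z₁ ∈ Qsq T) (hz₂ : z₂ ∈ Qsq T) :
    ‖f z₁ - f z₂‖ ≤ C * (‖z₁ - z₂‖ / T) ^ α := by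
  have := hf _ (div_mem_Qsq_one hT hz₁) _ (div_mem_Qsq_one hT hz₂)
  have hT' : (T : ℂ) ≠ 0 := ofReal_ne_zero.mpr hT.ne'
  rwa [mul_div_cancel₀ _ hT', mul_div_cancel₀ _ hT', ← sub_div, norm_div, norm_real,
    Real.norm_of_nonneg hT.le] at this

theorem norm_sub_one_le_two_mul {z : ℂ} {M : ℝ} (hM : 1 ≤ M) (hz : 0 ≤ z.re) (hre : z.re ≤ M)
    (him : |z.im| ≤ M) : ‖z - 1‖ ≤ 2 * M := by
  have re_le : |(z - 1).re| ≤ M := by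
    rw [sub_re, one_re, abs_le]
    constructor <;> linarith
  calc ‖z - 1‖
    _ ≤ |(z - 1).re| + |(z - 1).im| := norm_le_abs_re_add_abs_im _
    _ ≤ M + M := add_le_add re_le (by simpa using him)
    _ = 2 * M := (two_mul M).symm

end HolderTract

theorem boundary_point_estimate_general (φ : ℂ → ℂ) (H α : ℝ) (hH : 0 ≤ H) (hα : 0 ≤ α)
    (hdiff : DifferentiableOn ℂ φ {z : ℂ | 0 < z.re})
    (hinj : Set.InjOn φ {z : ℂ | 0 < z.re})
    (hHol : ∀ T : ℝ, 1 ≤ T → ∀ w₁ ∈ Qsq 1, ∀ w₂ ∈ Qsq 1,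
      ‖φ ((T : ℂ) * w₁) - φ ((T : ℂ) * w₂)‖
        ≤ H * T * ‖deriv φ (T : ℂ)‖ * ‖w₁ - w₂‖ ^ α)
    {a : ℂ} (ha : 0 < a.re) (ha₁ : 1 ≤ max a.re |a.im|) :
    ‖φ a‖ ≤ ‖φ 1‖ + 4 * H * ‖deriv φ 1‖ * max a.re |a.im| ^ 2 := by
  set M := max a.re |a.im|
  have re_le : a.re ≤ M := le_max_left _ _
  have im_le : |a.im| ≤ M := le_max_right _ _
  have a_mem : a ∈ Qsq (2 * M) :=
    ⟨ha, by linarith, by linarith [neg_abs_le a.im], by linarith [le_abs_self a.im]⟩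
  have one_mem : 1 ∈ Qsq (2 * M) := by
    refine ⟨?_, ?_, ?_, ?_⟩ <;> simp only [one_re, one_im] <;> linarith
  have ratio_le_one : ‖a - 1‖ / (2 * M) ≤ 1 :=
    (div_le_one (by linarith)).mpr (norm_sub_one_le_two_mul ha₁ ha.le re_le im_le)
  calc ‖φ a‖
    _ ≤ ‖φ 1‖ + ‖φ a - φ 1‖ := norm_le_norm_add_norm_sub' _ _
    _ ≤ ‖φ 1‖ + H * (2 * M) * ‖deriv φ (2 * M : ℝ)‖ * (‖a - 1‖ / (2 * M)) ^ α := by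
      gcongr
      exact norm_sub_le_of_mem_Qsq (by linarith) (hHol (2 * M) (by linarith)) a_mem one_mem
    _ ≤ ‖φ 1‖ + H * (2 * M) * (2 * M * ‖deriv φ 1‖) * 1 := by
      gcongr
      · exact norm_deriv_le_mul_norm_deriv_one hdiff hinj (by linarith)
      · exact Real.rpow_le_one (by positivity) ratio_le_one hα
    _ = ‖φ 1‖ + 4 * H * ‖deriv φ 1‖ * M ^ 2 := by ring

/-- Second part of Lemma 5.1 of the paper: if `a₀ = log R + i y`, `y ≥ 0`, and
`|φ(a₀)| = R`, then `R ≤ |φ(1)| + 32 H |φ'(1)| (max(log R, y))²`. -/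
theorem boundary_point_estimate (φ : ℂ → ℂ) (H α : ℝ)
    (hH : 0 < H) (hα : 0 < α) (hα1 : α ≤ 1)
    (hdiff : DifferentiableOn ℂ φ {z : ℂ | 0 < z.re})
    (hinj : Set.InjOn φ {z : ℂ | 0 < z.re})
    (hHol : ∀ T : ℝ, 1 ≤ T → ∀ w₁ ∈ Qsq 1, ∀ w₂ ∈ Qsq 1,
      ‖φ ((T : ℂ) * w₁) - φ ((T : ℂ) * w₂)‖
        ≤ H * T * ‖deriv φ (T : ℂ)‖ * ‖w₁ - w₂‖ ^ α) :
    ∀ R y : ℝ, Real.exp 1 ≤ R → 0 ≤ y →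
      ‖φ (((Real.log R : ℝ) : ℂ) + (y : ℂ) * Complex.I)‖ = R →
      R ≤ ‖φ 1‖ + 32 * H * ‖deriv φ 1‖ * (max (Real.log R) y) ^ 2 := by
  intro R y hR hy hφ
  have one_le_log : 1 ≤ Real.log R := (Real.le_log_iff_exp_le ((Real.exp_pos 1).trans_le hR)).mpr hR
  rw [← mk_eq_add_mul_I] at hφ
  calc R
    _ = ‖φ ⟨Real.log R, y⟩‖ := hφ.symm
    _ ≤ ‖φ 1‖ + 4 * H * ‖deriv φ 1‖ * max (Real.log R) |y| ^ 2 :=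
      boundary_point_estimate_general φ H α hH.le hα.le hdiff hinj hHol
        (one_pos.trans_le one_le_log) (le_max_of_le_left one_le_log)
    _ ≤ ‖φ 1‖ + 32 * H * ‖deriv φ 1‖ * max (Real.log R) y ^ 2 := by
      rw [abs_of_nonneg hy]
      gcongr
      norm_num
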